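/- Fix r ≥ 2 and 1 ≤ ℓ ≤ r-1 with ℓ odd, and let α = max{ℓ, r - (ℓ+1)/2}. Then ex_→(n, ord(I^r(ℓ))) = O(n^α): there is a constant C = C(r, ℓ) such that every ordered r-graph on [n] with more than C·n^α edges contains two edges e, f with |e ∩ f| = ℓ forming an interval r-partite configuration. -/

import Mathlib

/-- An interval in ℕ: a set of consecutive integers. -/
def IsIntervalN (I : Finset ℕ) : Prop := ∃ a b : ℕ, I = Finset.Icc a b

/-- Every element of `I` is smaller than every element of `J`. -/
def Precedes (I J : Finset ℕ) : Prop := ∀ x ∈ I, ∀ y ∈ J, x < y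

/-- An ordered hypergraph `H` is interval k-partite with parts of size at most `m`:
there are ℓ ≥ k disjoint intervals I₀ < I₁ < ⋯ < I_{ℓ-1}, each of size at most `m`,
such that every edge of `H` is contained in their union and intersects each of them. -/
def IntervalKPartiteB (k m : ℕ) (H : Finset (Finset ℕ)) : Prop :=
  ∃ ℓ, k ≤ ℓ ∧ ∃ I : ℕ → Finset ℕ,
    (∀ j < ℓ, IsIntervalN (I j)) ∧
    (∀ j < ℓ, (I j).card ≤ m) ∧
    (∀ j j', j < j' → j' < ℓ → Precedes (I j) (I j')) ∧
    ∀ e ∈ H, (∀ x ∈ e, ∃ j < ℓ, x ∈ I j) ∧ (∀ j < ℓ, (e ∩ I j).Nonempty)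

/-- An ordered hypergraph `H` is interval k-partite: there are ℓ ≥ k disjoint
intervals I₀ < I₁ < ⋯ < I_{ℓ-1} such that every edge of `H` is contained in
their union and intersects each of them. -/
def IntervalKPartite (k : ℕ) (H : Finset (Finset ℕ)) : Prop :=
  ∃ ℓ, k ≤ ℓ ∧ ∃ I : ℕ → Finset ℕ,
    (∀ j < ℓ, IsIntervalN (I j)) ∧
    (∀ j j', j < j' → j' < ℓ → Precedes (I j) (I j')) ∧
    ∀ e ∈ H, (∀ x ∈ e, ∃ j < ℓ, x ∈ I j) ∧ (∀ j < ℓ, (e ∩ I j).Nonempty)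

/-- An ordered hypergraph `H` is interval r-partite in the exact sense: there are
intervals I₀ < I₁ < ⋯ < I_{r-1} such that every edge of `H` has exactly one
vertex in each of them (and is contained in their union). -/
def IntervalPartiteExact (r : ℕ) (H : Finset (Finset ℕ)) : Prop :=
  ∃ I : ℕ → Finset ℕ,
    (∀ j < r, IsIntervalN (I j)) ∧
    (∀ j j', j < j' → j' < r → Precedes (I j) (I j')) ∧
    ∀ e ∈ H, (∀ x ∈ e, ∃ j < r, x ∈ I j) ∧ (∀ j < r, (e ∩ I j).card = 1)

/-!
Double the dyadic scale for as long as an edge has at most `s = (ℓ + 1) / 2` vertices that lie in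
the same block as an earlier vertex, and sort the edges by the last such scale `2 ^ j`.

One step later more than `s` vertices are repeats, so fewer than `r - s` blocks are occupied and
only `O((n / 2 ^ j) ^ (r - s - 1))` block patterns occur. Within one pattern having `t ≤ s`
repeats, fix the vertices at the repeats, which can be done in at most `(2 ^ j) ^ t` ways: any two
of the remaining edges form an interval `r`-partite configuration, as two vertices at different
positions either lie in different blocks or the later position is a repeat, where the edges agree.
So no two of these edges share exactly `ℓ` vertices, and the partite Frankl–Füredi theorem with `t`
vertices fixed leaves `O((2 ^ j) ^ max (ℓ - t) (r - ℓ - 1))` edges. As `t ≤ s`, the exponent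
`t + max (ℓ - t) (r - ℓ - 1)` is at most `α = max ℓ (r - s)`, and `r - s - 1 ≤ α - 1`; hence scale
`2 ^ j` contributes `O(n ^ (α - 1) * 2 ^ j)` edges, and the sum over `j` is geometric.

The partite theorem follows the delta-system method: up to a constant factor the family may be
taken homogeneous, and its intersection structure is then closed under intersection. A minimal set
of coordinates contained in no intersection determines each edge, and a theorem of Frankl and
Katona on bipartite graphs bounds its size when no intersection has `ℓ` elements.
-/

open Finset

section FranklKatona

variable {X Y : Type*} (R : X → Y → Prop) [∀ x y, Decidable (R x y)]

theorem exists_rel_card_bipartiteAbove_lt_card_bipartiteBelow {A : Finset X} {B : Finset Y}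
    (hAB : #B < #A) (hR : ∀ x ∈ A, (B.bipartiteAbove R x).Nonempty) :
    ∃ x ∈ A, ∃ y ∈ B, R x y ∧ #(B.bipartiteAbove R x) < #(A.bipartiteBelow R y) := by
  by_contra! hle
  -- Weigh each related pair by the inverse of one of its two degrees.
  have hA : (#A : ℚ) = ∑ x ∈ A, ∑ y ∈ B, if R x y then (#(B.bipartiteAbove R x) : ℚ)⁻¹ else 0 := by
    rw [card_eq_sum_ones, Nat.cast_sum]
    refine sum_congr rfl fun x hx => ?_
    have hne : (#(B.bipartiteAbove R x) : ℚ) ≠ 0 := by exact_mod_cast (hR x hx).card_pos.ne'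
    rw [← sum_filter, sum_const, nsmul_eq_mul, Nat.cast_one]
    exact (mul_inv_cancel₀ hne).symm
  have hB : ∑ x ∈ A, ∑ y ∈ B, (if R x y then (#(A.bipartiteBelow R y) : ℚ)⁻¹ else 0) ≤ #B := by
    rw [sum_comm, card_eq_sum_ones, Nat.cast_sum]
    refine sum_le_sum fun y _ => ?_
    rw [← sum_filter, sum_const, nsmul_eq_mul, Nat.cast_one]
    exact mul_inv_le_one
  have hAB' : (#A : ℚ) ≤ #B := by
    refine hA.trans_le (le_trans ?_ hB)
    gcongr with x hx y hy
    split_ifs with hxy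
    · have hpos : 0 < #(A.bipartiteBelow R y) := card_pos.mpr ⟨x, by simp [hx, hxy]⟩
      gcongr
      exact hle x hx y hy hxy
    · rfl
  exact hAB.not_ge (by exact_mod_cast hAB')

theorem exists_card_eq_card_common_add_one (A : Finset X) (B : Finset Y) (hAB : #B < #A) :
    ∃ J ⊆ A, #J = #{y ∈ B | ∀ x ∈ J, R x y} + 1 := by
  classical
  induction B using Finset.strongInduction generalizing A with
  | H B ih =>
  by_cases hisolated : ∃ x ∈ A, B.bipartiteAbove R x = ∅
  · obtain ⟨x, hx, hempty⟩ := hisolated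
    exact ⟨{x}, by simpa using hx, by simpa [bipartiteAbove, filter_eq_empty_iff] using hempty⟩
  push Not at hisolated
  obtain ⟨x, hx, y, hy, hxy, hdeg⟩ :=
    exists_rel_card_bipartiteAbove_lt_card_bipartiteBelow R hAB hisolated
  have hxA : x ∈ A.bipartiteBelow R y := by simp [hx, hxy]
  have hyB : y ∈ B.bipartiteAbove R x := by simp [hy, hxy]
  obtain ⟨J, hJ, hcard⟩ := ih ((B.bipartiteAbove R x).erase y)
    ((erase_ssubset hyB).trans_subset (filter_subset _ _)) ((A.bipartiteBelow R y).erase x) (by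
      rw [card_erase_of_mem hxA, card_erase_of_mem hyB]
      have := card_pos.mpr ⟨y, hyB⟩
      omega)
  have hJR : ∀ z ∈ J, z ≠ x ∧ z ∈ A ∧ R z y := fun z hz => by simpa using hJ hz
  have hcommon : {z ∈ B | ∀ w ∈ insert x J, R w z} =
      insert y {z ∈ (B.bipartiteAbove R x).erase y | ∀ w ∈ J, R w z} := by
    ext z
    by_cases hzy : z = y
    · subst hzy
      simpa [hy, hxy] using fun w hw => (hJR w hw).2.2
    · simp [hzy, and_assoc]
  refine ⟨insert x J, insert_subset hx fun z hz => (hJR z hz).2.1, ?_⟩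
  rw [hcommon, card_insert_of_notMem fun h => (hJR x h).1 rfl, card_insert_of_notMem (by simp),
    hcard]

theorem exists_card_eq_card_common_add (A : Finset X) (B : Finset Y) (p : ℕ)
    (hAB : #B + p < #A) :
    ∃ J ⊆ A, #J = #{y ∈ B | ∀ x ∈ J, R x y} + p + 1 := by
  classical
  obtain ⟨P, hPA, hP⟩ := exists_subset_card_eq (show p ≤ #A by omega)
  have hB : #{y ∈ B | ∀ x ∈ P, R x y} ≤ #B := card_filter_le _ _
  obtain ⟨J, hJ, hcard⟩ := exists_card_eq_card_common_add_one R (A \ P) {y ∈ B | ∀ x ∈ P, R x y}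
    (by rw [card_sdiff_of_subset hPA]; omega)
  have hdisj : Disjoint P J := disjoint_sdiff.mono_right hJ
  refine ⟨P ∪ J, union_subset hPA (hJ.trans sdiff_subset), ?_⟩
  rw [card_union_of_disjoint hdisj, hP, hcard, filter_filter]
  simp only [forall_mem_union]
  ring

end FranklKatona

section CoveringSet

variable {ι : Type*} [Fintype ι] [DecidableEq ι]

theorem exists_minimal_forall_not_subset {𝒥 : Set (Finset ι)} (huniv : univ ∉ 𝒥) :
    ∃ O : Finset ι, (∀ B ∈ 𝒥, ¬O ⊆ B) ∧ ∀ x ∈ O, ∃ B ∈ 𝒥, O.erase x ⊆ B := by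
  obtain ⟨O, hO⟩ : ∃ O : Finset ι, Minimal (fun O => ∀ B ∈ 𝒥, ¬O ⊆ B) O :=
    exists_minimal_of_wellFoundedLT _
      ⟨univ, fun B hB h => huniv (univ_subset_iff.mp h ▸ hB)⟩
  refine ⟨O, hO.prop, fun x hx => ?_⟩
  by_contra! hcon
  exact hO.not_prop_of_lt (erase_ssubset hx) hcon

theorem inf_eq_of_erase_subset {O S T : Finset ι} {B : ι → Finset ι} (hSO : S ⊆ O)
    (hself : ∀ x ∈ O, x ∉ B x) (hOB : ∀ x ∈ O, O.erase x ⊆ B x) (hT : ∀ x ∈ S, T ⊆ B x) :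
    S.inf B = ((O \ S) ∪ T) ∪ {y ∈ (O ∪ T)ᶜ | ∀ x ∈ S, y ∈ B x} := by
  ext y
  simp only [mem_inf, mem_union, mem_sdiff, mem_filter, mem_compl, not_or]
  have hyO : y ∈ O → ((∀ x ∈ S, y ∈ B x) ↔ y ∉ S) := fun hy =>
    ⟨fun h hyS => hself y hy (h y hyS), fun hyS x hx =>
      hOB x (hSO hx) (mem_erase.mpr ⟨fun h => hyS (h ▸ hx), hy⟩)⟩
  have hyT : y ∈ T → ∀ x ∈ S, y ∈ B x := fun hy x hx => hT x hx hy
  tauto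

theorem exists_card_le_forall_not_subset {𝒥 : Set (Finset ι)} (hinf : InfClosed 𝒥)
    (huniv : univ ∉ 𝒥) {T : Finset ι} (hT : ∀ B ∈ 𝒥, T ⊆ B) {ℓ : ℕ} (hℓ : ∀ B ∈ 𝒥, #B ≠ ℓ) :
    ∃ O : Finset ι, #O ≤ max (ℓ - #T) (Fintype.card ι - ℓ - 1) ∧ ∀ B ∈ 𝒥, ¬O ⊆ B := by
  obtain ⟨O, hO, hmin⟩ := exists_minimal_forall_not_subset huniv
  refine ⟨O, ?_, hO⟩
  by_contra! hcard
  choose! B hB𝒥 hOB using hmin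
  have hself : ∀ x ∈ O, x ∉ B x := fun x hx hxB =>
    hO _ (hB𝒥 x hx) ((insert_erase hx).symm.subset.trans (insert_subset hxB (hOB x hx)))
  have hdisj : Disjoint O T :=
    disjoint_left.mpr fun x hx hxT => hself x hx (hT _ (hB𝒥 x hx) hxT)
  have hcompl : #(O ∪ T)ᶜ = Fintype.card ι - (#O + #T) := by
    rw [card_compl, card_union_of_disjoint hdisj]
  have hOT : #O + #T ≤ Fintype.card ι := card_union_of_disjoint hdisj ▸ card_le_univ _
  obtain ⟨hℓO, hrO⟩ := max_lt_iff.mp hcard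
  -- The sets `B x` omit one point of `O` each, so this choice of `S` gives `#(⋂ x ∈ S, B x) = ℓ`.
  obtain ⟨S, hSO, hS⟩ :=
    exists_card_eq_card_common_add (fun x y => y ∈ B x) O (O ∪ T)ᶜ (#O + #T - ℓ - 1) (by omega)
  replace hS : #S = #{y ∈ (O ∪ T)ᶜ | ∀ x ∈ S, y ∈ B x} + (#O + #T - ℓ - 1) + 1 := by convert hS
  have hSne : S.Nonempty := card_pos.mp (by omega)
  have hinter : #(S.inf B) = ℓ := by
    rw [inf_eq_of_erase_subset hSO hself hOB fun x hx => hT _ (hB𝒥 x (hSO hx)),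
      card_union_of_disjoint, card_union_of_disjoint (hdisj.mono_left sdiff_subset)]
    · have := card_sdiff_add_card_eq_card hSO
      omega
    · exact (disjoint_compl_right.mono_left (union_subset_union_left sdiff_subset)).mono_right
        (filter_subset _ _)
  exact hℓ _ (inf'_eq_inf hSne B ▸ hinf.finsetInf'_mem hSne fun x hx => hB𝒥 x (hSO hx)) hinter

end CoveringSet

section Agreement

variable {ι α : Type*} [Fintype ι] [DecidableEq ι] [DecidableEq α]

/-- The coordinates on which two vectors agree. For edges of an `ι`-partite hypergraph, written as
vectors with one vertex per part, this encodes their intersection. -/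
def agreement (e f : ι → α) : Finset ι := {i | e i = f i}

/-- The agreement sets of distinct pairs from a family of vectors: the intersection structure of
the corresponding partite hypergraph. -/
def agreementSets (F : Finset (ι → α)) : Finset (Finset ι) :=
  F.offDiag.image fun p => agreement p.1 p.2

/-- A family of vectors is flexible at a set `A` of coordinates if each of its members can be
changed off `A`, within the family, so as to avoid any prescribed vector there. This is the form in
which the sunflowers with kernel `A` of the delta-system method are used. -/
def IsFlexibleAt (F : Finset (ι → α)) (A : Finset ι) : Prop :=
  ∀ e ∈ F, ∀ g : ι → α, ∃ f ∈ F, (∀ i ∈ A, f i = e i) ∧ ∀ i ∉ A, f i ≠ g i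

/-- A family of vectors is homogeneous if it is flexible at each of its agreement sets; compare the
homogeneous families of Füredi's delta-system theorem. -/
def HomogeneousFamily (F : Finset (ι → α)) : Prop :=
  ∀ A ∈ agreementSets F, IsFlexibleAt F A

omit [DecidableEq ι] in
@[simp]
theorem mem_agreement {e f : ι → α} {i : ι} : i ∈ agreement e f ↔ e i = f i := by
  simp [agreement]

omit [DecidableEq ι] in
theorem agreement_comm (e f : ι → α) : agreement e f = agreement f e := by
  ext i
  simp [eq_comm]

omit [DecidableEq ι] in
theorem agreement_eq_univ {e f : ι → α} : agreement e f = univ ↔ e = f := by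
  simp [Finset.ext_iff, funext_iff]

theorem mem_agreementSets {F : Finset (ι → α)} {A : Finset ι} :
    A ∈ agreementSets F ↔ ∃ e ∈ F, ∃ f ∈ F, e ≠ f ∧ agreement e f = A := by
  simp [agreementSets, and_assoc]

theorem notMem_agreementSets {F : Finset (ι → α)} {A : Finset ι} :
    A ∉ agreementSets F ↔ (F : Set (ι → α)).Pairwise fun e f => agreement e f ≠ A := by
  simp [mem_agreementSets, Set.Pairwise]

theorem agreementSets_mono {F G : Finset (ι → α)} (h : F ⊆ G) :
    agreementSets F ⊆ agreementSets G :=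
  image_subset_image (offDiag_mono h)

theorem univ_notMem_agreementSets (F : Finset (ι → α)) : univ ∉ agreementSets F :=
  notMem_agreementSets.mpr fun _ _ _ _ hne h => hne (agreement_eq_univ.mp h)

theorem HomogeneousFamily.infClosed_agreementSets {F : Finset (ι → α)}
    (hF : HomogeneousFamily F) : InfClosed (agreementSets F : Set (Finset ι)) := by
  intro A hA B hB
  obtain ⟨e, he, -⟩ := mem_agreementSets.mp hA
  obtain ⟨f, hf, hfA, hfe⟩ := hF A hA e he e
  obtain ⟨g, hg, hgB, hgf⟩ := hF B hB e he f
  have hfg : agreement f g = A ⊓ B := by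
    ext i
    rw [mem_agreement, inf_eq_inter, mem_inter]
    refine ⟨fun h => ?_, fun ⟨hiA, hiB⟩ => (hfA i hiA).trans (hgB i hiB).symm⟩
    have hiB : i ∈ B := by_contra fun hi => hgf i hi h.symm
    exact ⟨by_contra fun hi => hfe i hi (h.trans (hgB i hiB)), hiB⟩
  refine mem_agreementSets.mpr ⟨f, hf, g, hg, fun h => ?_, hfg⟩
  have hAuniv : A = univ :=
    univ_subset_iff.mp ((hfg.symm.trans (agreement_eq_univ.mpr h)).ge.trans inter_subset_left)
  exact univ_notMem_agreementSets F (hAuniv ▸ hA)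

theorem card_image_restrict_le {F : Finset (ι → α)} {V : ι → Finset α} {m : ℕ}
    (hF : F ⊆ Fintype.piFinset V) (hV : ∀ i, #(V i) ≤ m) (T : Finset ι) :
    #(F.image T.restrict) ≤ m ^ #T := by
  have hsub : F.image T.restrict ⊆ Fintype.piFinset fun i : T => V i :=
    image_subset_iff.mpr fun e he =>
      Fintype.mem_piFinset.mpr fun i => Fintype.mem_piFinset.mp (hF he) i
  calc #(F.image T.restrict) ≤ ∏ i : T, #(V i) := (card_le_card hsub).trans_eq (by simp)
    _ ≤ m ^ #T := by simpa using prod_le_pow_card univ (fun i : T => #(V i)) m fun i _ => hV i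

theorem card_le_pow_of_forall_not_subset {F : Finset (ι → α)} {V : ι → Finset α} {m : ℕ}
    (hF : F ⊆ Fintype.piFinset V) (hV : ∀ i, #(V i) ≤ m) {O : Finset ι}
    (hO : ∀ A ∈ agreementSets F, ¬O ⊆ A) : #F ≤ m ^ #O := by
  have hinj : Set.InjOn O.restrict (F : Set (ι → α)) := fun e he f hf hef => by
    by_contra hne
    exact hO _ (mem_agreementSets.mpr ⟨e, he, f, hf, hne, rfl⟩) fun i hi =>
      mem_agreement.mpr (congrFun hef ⟨i, hi⟩)
  exact (card_image_of_injOn hinj).symm.trans_le (card_image_restrict_le hF hV O)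

theorem HomogeneousFamily.card_le {F : Finset (ι → α)} (hF : HomogeneousFamily F)
    {V : ι → Finset α} {m : ℕ} (hm : 0 < m) (hFV : F ⊆ Fintype.piFinset V)
    (hV : ∀ i, #(V i) ≤ m) {T : Finset ι} (hT : ∀ e ∈ F, ∀ f ∈ F, ∀ i ∈ T, e i = f i) {ℓ : ℕ}
    (hℓ : ∀ A ∈ agreementSets F, #A ≠ ℓ) :
    #F ≤ m ^ max (ℓ - #T) (Fintype.card ι - ℓ - 1) := by
  have hTA : ∀ A ∈ agreementSets F, T ⊆ A := by
    intro A hA i hi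
    obtain ⟨e, he, f, hf, -, rfl⟩ := mem_agreementSets.mp hA
    exact mem_agreement.mpr (hT e he f hf i hi)
  obtain ⟨O, hOcard, hO⟩ := exists_card_le_forall_not_subset hF.infClosed_agreementSets
    (univ_notMem_agreementSets F) hTA hℓ
  exact (card_le_pow_of_forall_not_subset hFV hV hO).trans (Nat.pow_le_pow_right hm hOcard)

theorem exists_card_le_mul_of_not_isFlexibleAt {F : Finset (ι → α)} {A : Finset ι}
    (hA : ¬IsFlexibleAt F A) :
    ∃ e ∈ F, ∃ i ∉ A, ∃ a, #{f ∈ F | ∀ j ∈ A, f j = e j} ≤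
      Fintype.card ι * #{f ∈ F | (∀ j ∈ A, f j = e j) ∧ f i = a} := by
  unfold IsFlexibleAt at hA
  push Not at hA
  obtain ⟨e, he, g, hg⟩ := hA
  have hne : Aᶜ.Nonempty := by
    obtain ⟨i, hi, -⟩ := hg e he fun _ _ => rfl
    exact ⟨i, mem_compl.mpr hi⟩
  have hcover : {f ∈ F | ∀ j ∈ A, f j = e j} ⊆
      Aᶜ.biUnion fun i => {f ∈ F | (∀ j ∈ A, f j = e j) ∧ f i = g i} := by
    intro f hf
    obtain ⟨hfF, hfe⟩ := mem_filter.mp hf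
    obtain ⟨i, hi, hfi⟩ := hg f hfF hfe
    exact mem_biUnion.mpr ⟨i, mem_compl.mpr hi, mem_filter.mpr ⟨hfF, hfe, hfi⟩⟩
  obtain ⟨i, hi, hle⟩ : ∃ i ∈ Aᶜ, #{f ∈ F | ∀ j ∈ A, f j = e j} ≤
      Fintype.card ι * #{f ∈ F | (∀ j ∈ A, f j = e j) ∧ f i = g i} := by
    refine exists_le_of_sum_le hne ?_
    rw [sum_const, smul_eq_mul, ← mul_sum]
    exact Nat.mul_le_mul (card_le_univ _) ((card_le_card hcover).trans card_biUnion_le)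
  exact ⟨e, he, i, mem_compl.mp hi, g i, hle⟩

theorem notMem_agreementSets_union_filter {F D : Finset (ι → α)} {A : Finset ι} (e : ι → α)
    {i : ι} (hi : i ∉ A) (a : α) (hD : D ⊆ F \ {f ∈ F | ∀ j ∈ A, f j = e j})
    (hDA : A ∉ agreementSets D) :
    A ∉ agreementSets (D ∪ {f ∈ F | (∀ j ∈ A, f j = e j) ∧ f i = a}) := by
  -- Vectors from different `A`-fibres already disagree somewhere on `A`, and two vectors of the new
  -- part agree at `i ∉ A`.
  rw [notMem_agreementSets] at hDA ⊢
  have : Std.Symm fun f g : ι → α => agreement f g ≠ A := ⟨fun f g h => agreement_comm f g ▸ h⟩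
  rw [coe_union, Set.pairwise_union_of_symm]
  refine ⟨hDA, fun f hf g hg _ hfg => hi ?_, fun f hf g hg _ hfg => ?_⟩
  · rw [← hfg, mem_agreement, (mem_filter.mp hf).2.2, (mem_filter.mp hg).2.2]
  · obtain ⟨hfF, hfe⟩ := mem_sdiff.mp (hD hf)
    refine hfe (mem_filter.mpr ⟨hfF, fun j hj => ?_⟩)
    have hj' : f j = g j := mem_agreement.mp (hfg.symm ▸ hj)
    exact hj'.trans ((mem_filter.mp hg).2.1 j hj)

theorem exists_subset_forall_isFlexibleAt (𝒜 : Finset (Finset ι)) (F : Finset (ι → α)) :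
    ∃ F₀ ⊆ F, ∃ D : Finset ι → Finset (ι → α), (∀ A, D A ⊆ F) ∧
      (∀ A ∈ 𝒜, A ∉ agreementSets (D A)) ∧ (∀ A ∈ 𝒜, IsFlexibleAt F₀ A) ∧
      #F ≤ #F₀ + Fintype.card ι * ∑ A ∈ 𝒜, #(D A) := by
  induction F using Finset.strongInduction with
  | H F ih =>
  by_cases hflex : ∀ A ∈ 𝒜, IsFlexibleAt F A
  · exact ⟨F, Subset.rfl, fun _ => ∅, by simp, by simp [agreementSets], hflex, by simp⟩
  push Not at hflex
  obtain ⟨A, hA, hnot⟩ := hflex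
  obtain ⟨e, he, i, hi, a, hcard⟩ := exists_card_le_mul_of_not_isFlexibleAt hnot
  set G := {f ∈ F | ∀ j ∈ A, f j = e j}
  set G' := {f ∈ F | (∀ j ∈ A, f j = e j) ∧ f i = a}
  have hG : G ⊆ F := filter_subset _ _
  have heG : e ∈ G := mem_filter.mpr ⟨he, fun _ _ => rfl⟩
  obtain ⟨F₀, hF₀, D, hD, hDA, hflex, hle⟩ := ih (F \ G) (sdiff_ssubset hG ⟨e, heG⟩)
  refine ⟨F₀, hF₀.trans sdiff_subset, Function.update D A (D A ∪ G'), fun B => ?_, fun B hB => ?_,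
    hflex, ?_⟩
  · obtain rfl | hBA := eq_or_ne B A
    · simpa using union_subset ((hD B).trans sdiff_subset) (filter_subset _ _)
    · simpa [hBA] using (hD B).trans sdiff_subset
  · obtain rfl | hBA := eq_or_ne B A
    · simpa using notMem_agreementSets_union_filter e hi a (hD B) (hDA B hB)
    · simpa [hBA] using hDA B hB
  · have hdisj : Disjoint (D A) G' := disjoint_left.mpr fun f hf hf' =>
      (mem_sdiff.mp (hD A hf)).2 (mem_filter.mpr ((mem_filter.mp hf').imp_right And.left))
    have hsum : ∑ B ∈ 𝒜, #(Function.update D A (D A ∪ G') B) = ∑ B ∈ 𝒜, #(D B) + #G' := by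
      rw [← add_sum_erase 𝒜 _ hA, ← add_sum_erase 𝒜 (fun B => #(D B)) hA, Function.update_self,
        card_union_of_disjoint hdisj,
        sum_congr rfl fun B hB => by rw [Function.update_of_ne (ne_of_mem_erase hB)]]
      ring
    calc #F = #(F \ G) + #G := (card_sdiff_add_card_eq_card hG).symm
      _ ≤ #F₀ + Fintype.card ι * ∑ B ∈ 𝒜, #(D B) + Fintype.card ι * #G' := by gcongr
      _ = _ := by rw [hsum]; ring

theorem card_le_of_forall_homogeneousFamily {F : Finset (ι → α)} {M : ℕ}
    (hM : ∀ F₀ ⊆ F, HomogeneousFamily F₀ → #F₀ ≤ M) {u : ℕ} (hu : #(agreementSets F) ≤ u) :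
    #F ≤ (1 + Fintype.card ι * 2 ^ Fintype.card ι) ^ u * M := by
  set r := Fintype.card ι
  induction u generalizing F with
  | zero =>
    have hempty : agreementSets F = ∅ := card_eq_zero.mp (Nat.le_zero.mp hu)
    simpa using hM F Subset.rfl (by simp [HomogeneousFamily, hempty])
  | succ u ih =>
    obtain ⟨F₀, hF₀, D, hDF, hDA, hflex, hle⟩ :=
      exists_subset_forall_isFlexibleAt (agreementSets F) F
    have hF₀M : #F₀ ≤ M := hM F₀ hF₀ fun A hA => hflex A (agreementSets_mono hF₀ hA)
    have hD : ∀ A ∈ agreementSets F, #(D A) ≤ (1 + r * 2 ^ r) ^ u * M := by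
      intro A hA
      have hlt : agreementSets (D A) ⊂ agreementSets F :=
        (agreementSets_mono (hDF A)).ssubset_of_mem_notMem hA (hDA A hA)
      exact ih (fun F₁ hF₁ => hM F₁ (hF₁.trans (hDF A)))
        (Nat.le_of_lt_succ ((card_lt_card hlt).trans_le hu))
    have hcard : #(agreementSets F) ≤ 2 ^ r := by simpa using card_le_univ (agreementSets F)
    calc #F ≤ #F₀ + r * ∑ A ∈ agreementSets F, #(D A) := hle
      _ ≤ M + r * (2 ^ r * ((1 + r * 2 ^ r) ^ u * M)) := by
        gcongr
        exact (sum_le_card_nsmul _ _ _ hD).trans (Nat.mul_le_mul_right _ hcard)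
      _ ≤ (1 + r * 2 ^ r) ^ u * M + r * (2 ^ r * ((1 + r * 2 ^ r) ^ u * M)) := by
        gcongr
        exact Nat.le_mul_of_pos_left _ (by positivity)
      _ = (1 + r * 2 ^ r) ^ (u + 1) * M := by ring

/-- The constant in the partite Frankl–Füredi theorem for `r` parts. The exponent bounds the number
of agreement sets, each of which costs one round of `card_le_of_forall_homogeneousFamily`. -/
def franklFurediConst (r : ℕ) : ℕ := (1 + r * 2 ^ r) ^ 2 ^ r

theorem partite_frankl_furedi {F : Finset (ι → α)} {V : ι → Finset α} {m : ℕ} (hm : 0 < m)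
    (hFV : F ⊆ Fintype.piFinset V) (hV : ∀ i, #(V i) ≤ m) {T : Finset ι}
    (hT : ∀ e ∈ F, ∀ f ∈ F, ∀ i ∈ T, e i = f i) {ℓ : ℕ} (hℓ : ∀ A ∈ agreementSets F, #A ≠ ℓ) :
    #F ≤ franklFurediConst (Fintype.card ι) * m ^ max (ℓ - #T) (Fintype.card ι - ℓ - 1) := by
  refine card_le_of_forall_homogeneousFamily (fun F₀ hF₀ hhom => ?_)
    (by simpa using card_le_univ (agreementSets F))
  exact hhom.card_le hm (hF₀.trans hFV) hV (fun e he f hf => hT e (hF₀ he) f (hF₀ hf))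
    fun A hA => hℓ A (agreementSets_mono hF₀ hA)

end Agreement

section Repeats

variable {ι α : Type*} [LinearOrder ι] [Fintype ι] [DecidableEq α]

/-- The coordinates of a vector whose entry already occurs at an earlier coordinate. -/
def repeats (p : ι → α) : Finset ι := {i | ∃ j < i, p j = p i}

theorem card_image_add_card_repeats (p : ι → α) :
    #(univ.image p) + #(repeats p) = Fintype.card ι := by
  have hinj : Set.InjOn p ((repeats p)ᶜ : Finset ι) := by
    intro i hi j hj hij
    simp only [repeats, coe_compl, coe_filter, mem_univ, true_and, Set.mem_compl_iff,
      Set.mem_ofPred_eq, not_exists, not_and] at hi hj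
    exact le_antisymm (not_lt.mp fun h => hi j h hij.symm) (not_lt.mp fun h => hj i h hij)
  have himage : (repeats p)ᶜ.image p = univ.image p := by
    refine (image_subset_image (subset_univ _)).antisymm fun x hx => ?_
    obtain ⟨i, -, rfl⟩ := mem_image.mp hx
    obtain ⟨j, hj⟩ := exists_minimal_of_wellFoundedLT (fun j => p j = p i) ⟨i, rfl⟩
    refine mem_image.mpr ⟨j, ?_, hj.prop⟩
    simpa [repeats] using fun k hk hkj => hj.not_prop_of_lt hk (hkj.trans hj.prop)
  rw [← himage, card_image_of_injOn hinj, card_compl_add_card]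

theorem repeats_eq_empty {p : ι → α} (hp : Function.Injective p) : repeats p = ∅ := by
  simpa [repeats, filter_eq_empty_iff] using fun i j hji h => hji.ne (hp h)

end Repeats

section Interleaved

variable {ι α : Type*} [LinearOrder ι] [Fintype ι] [LinearOrder α]

/-- Two vectors are interleaved if, for each pair of coordinates, both entries at the earlier
coordinate are below both entries at the later one. For edges listed in increasing order, this says
that they form an interval partite configuration. -/
def Interleaved (e f : ι → α) : Prop :=
  ∀ ⦃i j⦄, i < j → max (e i) (f i) < min (e j) (f j)

theorem Interleaved.card_image_inter_image {e f : ι → α} (h : Interleaved e f) :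
    #(univ.image e ∩ univ.image f) = #(agreement e f) := by
  have hcross : ∀ i j, e i = f j → i = j := fun i j hij => by
    obtain hlt | heq | hgt := lt_trichotomy i j
    · exact absurd hij (((le_max_left _ _).trans_lt (h hlt)).trans_le (min_le_right _ _)).ne
    · exact heq
    · exact absurd hij (((le_max_right _ _).trans_lt (h hgt)).trans_le (min_le_left _ _)).ne'
  have hinj : Function.Injective e := StrictMono.injective fun i j hij =>
    ((le_max_left _ _).trans_lt (h hij)).trans_le (min_le_left _ _)
  have himage : univ.image e ∩ univ.image f = (agreement e f).image e := by
    ext x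
    simp only [mem_inter, mem_image, mem_univ, true_and, mem_agreement]
    constructor
    · rintro ⟨⟨i, rfl⟩, j, hj⟩
      obtain rfl := hcross i j hj.symm
      exact ⟨i, hj.symm, rfl⟩
    · rintro ⟨i, hi, rfl⟩
      exact ⟨⟨i, rfl⟩, i, hi.symm⟩
  rw [himage, card_image_of_injective _ hinj]

variable {γ : Type*} [LinearOrder γ] {b : α → γ}

theorem interleaved_of_comp_eq (hb : Monotone b) {e f : ι → α} (he : StrictMono e)
    (hf : StrictMono f) (hef : b ∘ e = b ∘ f) (hrepeats : ∀ i ∈ repeats (b ∘ e), e i = f i) :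
    Interleaved e f := by
  intro i j hij
  have hbf : ∀ k, b (f k) = b (e k) := fun k => (congrFun hef k).symm
  obtain hlt | heq := (hb (he hij).le).lt_or_eq
  · simp only [max_lt_iff, lt_min_iff]
    exact ⟨⟨he hij, hb.reflect_lt (by rwa [hbf])⟩, hb.reflect_lt (by rwa [hbf]), hf hij⟩
  · have hj : e j = f j := hrepeats j (by simpa [repeats] using ⟨i, hij, heq⟩)
    rw [hj, min_self, max_lt_iff]
    exact ⟨hj ▸ he hij, hf hij⟩

theorem card_le_of_forall_comp_eq (hb : Monotone b) {F : Finset (ι → α)}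
    (hF : ∀ e ∈ F, StrictMono e) {p : ι → γ} (hp : ∀ e ∈ F, b ∘ e = p) {V : ι → Finset α} {m : ℕ}
    (hm : 0 < m) (hFV : F ⊆ Fintype.piFinset V) (hV : ∀ i, #(V i) ≤ m) {ℓ : ℕ}
    (hℓ : (F : Set (ι → α)).Pairwise fun e f => Interleaved e f → #(agreement e f) ≠ ℓ) :
    #F ≤ franklFurediConst (Fintype.card ι) *
      m ^ (max (ℓ - #(repeats p)) (Fintype.card ι - ℓ - 1) + #(repeats p)) := by
  set T := repeats p
  have hfibre : ∀ v ∈ F.image T.restrict, #{e ∈ F | T.restrict e = v} ≤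
      franklFurediConst (Fintype.card ι) * m ^ max (ℓ - #T) (Fintype.card ι - ℓ - 1) := by
    intro v _
    have hagree : ∀ e ∈ F, T.restrict e = v → ∀ f ∈ F, T.restrict f = v → ∀ i ∈ T, e i = f i :=
      fun e _ hev f _ hfv i hi => congrFun (hev.trans hfv.symm) ⟨i, hi⟩
    refine partite_frankl_furedi hm ((filter_subset _ _).trans hFV) hV (T := T) ?_ ?_
    · intro e he f hf
      exact hagree e (mem_filter.mp he).1 (mem_filter.mp he).2 f (mem_filter.mp hf).1
        (mem_filter.mp hf).2
    · intro A hA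
      obtain ⟨e, he, f, hf, hne, rfl⟩ := mem_agreementSets.mp hA
      obtain ⟨he, hev⟩ := mem_filter.mp he
      obtain ⟨hf, hfv⟩ := mem_filter.mp hf
      refine hℓ he hf hne (interleaved_of_comp_eq hb (hF e he) (hF f hf)
        ((hp e he).trans (hp f hf).symm) ?_)
      rw [hp e he]
      exact hagree e he hev f hf hfv
  rw [pow_add, ← mul_assoc]
  exact (card_le_mul_card_image F _ hfibre).trans
    (Nat.mul_le_mul_left _ (card_image_restrict_le hFV hV T))

end Interleaved

section IntervalPartite

theorem intervalPartiteExact_of_mem_Icc {r : ℕ} {a b : Fin r → ℕ}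
    (hab : ∀ ⦃i j⦄, i < j → b i < a j) {H : Finset (Finset ℕ)}
    (hH : ∀ s ∈ H, ∃ g : Fin r → ℕ, (∀ i, g i ∈ Icc (a i) (b i)) ∧ univ.image g = s) :
    IntervalPartiteExact r H := by
  let I : ℕ → Finset ℕ := fun j => if h : j < r then Icc (a ⟨j, h⟩) (b ⟨j, h⟩) else ∅
  have hI : ∀ i : Fin r, I i = Icc (a i) (b i) := fun i => by simp [I]
  refine ⟨I, fun j hj => ⟨_, _, hI ⟨j, hj⟩⟩, fun j k hjk hk x hx y hy => ?_, fun s hs => ?_⟩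
  · have hlt := hab (i := ⟨j, hjk.trans hk⟩) (j := ⟨k, hk⟩) hjk
    rw [hI ⟨j, hjk.trans hk⟩, mem_Icc] at hx
    rw [hI ⟨k, hk⟩, mem_Icc] at hy
    exact (hx.2.trans_lt hlt).trans_le hy.1
  · obtain ⟨g, hg, rfl⟩ := hH s hs
    refine ⟨fun x hx => ?_, fun j hj => ?_⟩
    · obtain ⟨i, -, rfl⟩ := mem_image.mp hx
      exact ⟨i, i.2, hI i ▸ hg i⟩
    · have hinter : univ.image g ∩ I j = {g ⟨j, hj⟩} := by
        rw [hI ⟨j, hj⟩]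
        refine eq_singleton_iff_unique_mem.mpr ⟨by simp [-mem_Icc, hg], fun x hx => ?_⟩
        obtain ⟨hxg, hxI⟩ := mem_inter.mp hx
        obtain ⟨i, -, rfl⟩ := mem_image.mp hxg
        rw [mem_Icc] at hxI
        obtain hlt | rfl | hgt := lt_trichotomy i ⟨j, hj⟩
        · exact absurd (hab hlt) ((hxI.1.trans (mem_Icc.mp (hg i)).2).not_gt)
        · rfl
        · exact absurd (hab hgt) (((mem_Icc.mp (hg i)).1.trans hxI.2).not_gt)
      rw [hinter, card_singleton]

theorem Interleaved.intervalPartiteExact {r : ℕ} {e f : Fin r → ℕ} (h : Interleaved e f) :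
    IntervalPartiteExact r {univ.image e, univ.image f} := by
  refine intervalPartiteExact_of_mem_Icc h fun s hs => ?_
  obtain rfl | rfl := by simpa using hs
  · exact ⟨e, by simp, rfl⟩
  · exact ⟨f, by simp, rfl⟩

end IntervalPartite

section Patterns

variable {ι : Type*} [Fintype ι]

theorem card_le_pow_mul_pow_of_card_image_le {α : Type*} [DecidableEq α] [Nonempty ι]
    {P : Finset (ι → α)} {V : Finset α} (hPV : ∀ p ∈ P, ∀ i, p i ∈ V) {q : ℕ}
    (hP : ∀ p ∈ P, #(univ.image p) ≤ q) :
    #P ≤ q ^ Fintype.card ι * #V ^ q := by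
  classical
  have hfactor : P ⊆ (univ ×ˢ Fintype.piFinset fun _ => V).image
      fun uv : (ι → Fin q) × (Fin q → α) => uv.2 ∘ uv.1 := by
    intro p hp
    obtain ⟨φ⟩ : Nonempty (univ.image p ↪ Fin q) :=
      Function.Embedding.nonempty_of_card_le (by simpa using hP p hp)
    have : Nonempty (univ.image p) := univ_nonempty.image p |>.to_subtype
    refine mem_image.mpr ⟨⟨fun i => φ ⟨p i, mem_image_of_mem p (mem_univ i)⟩,
      fun k => (Function.invFun φ k : univ.image p)⟩, ?_, ?_⟩
    · refine mem_product.mpr ⟨mem_univ _, Fintype.mem_piFinset.mpr fun k => ?_⟩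
      obtain ⟨i, -, hi⟩ := mem_image.mp (Function.invFun φ k).2
      exact (congrArg (· ∈ V) hi).mp (hPV p hp i)
    · ext i
      simp [Function.leftInverse_invFun φ.injective _]
  calc #P ≤ #((univ : Finset (ι → Fin q)) ×ˢ Fintype.piFinset fun _ : Fin q => V) :=
        (card_le_card hfactor).trans card_image_le
    _ = q ^ Fintype.card ι * #V ^ q := by simp

theorem card_le_two_pow_mul_card_image_div_two (P : Finset (ι → ℕ)) :
    #P ≤ 2 ^ Fintype.card ι * #(P.image fun p i => p i / 2) := by
  classical
  refine card_le_mul_card_image P _ fun v _ => ?_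
  have hsub : {p ∈ P | (fun i => p i / 2) = v} ⊆
      Fintype.piFinset fun i => Ico (v i * 2) (v i * 2 + 2) := by
    intro p hp
    refine Fintype.mem_piFinset.mpr fun i => mem_Ico.mpr ?_
    have := congrFun (mem_filter.mp hp).2 i
    omega
  exact (card_le_card hsub).trans_eq (by simp)

theorem card_le_of_forall_card_image_half_le [Nonempty ι] {P : Finset (ι → ℕ)}
    {N q : ℕ} (hPN : ∀ p ∈ P, ∀ i, p i / 2 < N)
    (hP : ∀ p ∈ P, #(univ.image fun i => p i / 2) ≤ q) :
    #P ≤ 2 ^ Fintype.card ι * (q ^ Fintype.card ι * N ^ q) := by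
  refine (card_le_two_pow_mul_card_image_div_two P).trans (Nat.mul_le_mul_left _ ?_)
  simpa using card_le_pow_mul_pow_of_card_image_le (V := range N)
    (by simpa [forall_mem_image] using hPN) (by simpa [forall_mem_image] using hP)

end Patterns

section DyadicScales

variable {ι : Type*} [Fintype ι] [LinearOrder ι]

/-- The dyadic blocks, of length `2 ^ j`, that contain the entries of a vector. -/
def dyadicPattern (j : ℕ) (e : ι → ℕ) : ι → ℕ := fun i => e i / 2 ^ j

/-- The scale `j ≤ J` is critical for a vector if its dyadic pattern has at most `s` repeats, but
more than that once the length of the blocks is doubled. No doubling is asked for at the top scale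
`J`. -/
def IsCriticalScale (J s j : ℕ) (e : ι → ℕ) : Prop :=
  #(repeats (dyadicPattern j e)) ≤ s ∧ (j < J → s < #(repeats (dyadicPattern (j + 1) e)))

/-- The constant in the bound for the `r`-vectors with a given critical scale. -/
def criticalScaleConst (r : ℕ) : ℕ := 2 ^ r * r ^ r * franklFurediConst r

theorem exists_isCriticalScale (J s : ℕ) {e : ι → ℕ} (he : Function.Injective e) :
    ∃ j ≤ J, IsCriticalScale J s j e := by
  let Q : ℕ → Prop := fun j => #(repeats (dyadicPattern j e)) ≤ s
  have hQ : Q 0 := by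
    have : dyadicPattern 0 e = e := by ext; simp [dyadicPattern]
    simp [Q, this, repeats_eq_empty he]
  refine ⟨Nat.findGreatest Q J, Nat.findGreatest_le J,
    Nat.findGreatest_spec (P := Q) (Nat.zero_le J) hQ, fun hlt => ?_⟩
  exact not_le.mp (Nat.findGreatest_is_greatest (P := Q) (Nat.lt_succ_self _) hlt)

theorem card_image_dyadicPattern_le [Nonempty ι] {J s j : ℕ} (hj : j ≤ J) {F : Finset (ι → ℕ)}
    (hFJ : ∀ e ∈ F, ∀ i, e i < 2 ^ J) (hF : ∀ e ∈ F, IsCriticalScale J s j e) :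
    #(F.image (dyadicPattern j)) ≤ 2 ^ Fintype.card ι *
      (Fintype.card ι ^ Fintype.card ι * (2 ^ (J - j)) ^ (Fintype.card ι - s - 1)) := by
  set r := Fintype.card ι
  obtain rfl | hlt := hj.eq_or_lt
  · have hsub : F.image (dyadicPattern j) ⊆ {0} := by
      refine image_subset_iff.mpr fun e he => mem_singleton.mpr ?_
      ext i
      exact Nat.div_eq_of_lt (hFJ e he i)
    have hpos : 0 < r ^ r := by positivity
    simpa using (card_le_card hsub).trans (Nat.mul_pos (by positivity) hpos)
  · have hhalf : ∀ e : ι → ℕ, (fun i => dyadicPattern j e i / 2) = dyadicPattern (j + 1) e :=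
      fun e => by ext i; simp [dyadicPattern, Nat.div_div_eq_div_mul, pow_succ]
    have hcount : #(F.image (dyadicPattern j)) ≤
        2 ^ r * ((r - s - 1) ^ r * (2 ^ (J - (j + 1))) ^ (r - s - 1)) := by
      apply card_le_of_forall_card_image_half_le
      · refine forall_mem_image.mpr fun e he i => ?_
        rw [congrFun (hhalf e) i]
        refine Nat.div_lt_of_lt_mul ?_
        rw [← pow_add, Nat.add_sub_cancel' hlt]
        exact hFJ e he i
      · refine forall_mem_image.mpr fun e he => ?_
        have hrepeats := (hF e he).2 hlt
        have hcard := card_image_add_card_repeats (dyadicPattern (j + 1) e)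
        rw [hhalf]
        omega
    refine hcount.trans ?_
    gcongr <;> omega

theorem card_le_of_forall_dyadicPattern_eq {j ℓ : ℕ} {F : Finset (ι → ℕ)} {p : ι → ℕ}
    (hmono : ∀ e ∈ F, StrictMono e) (hp : ∀ e ∈ F, dyadicPattern j e = p)
    (hℓ : (F : Set (ι → ℕ)).Pairwise fun e f => Interleaved e f → #(agreement e f) ≠ ℓ) :
    #F ≤ franklFurediConst (Fintype.card ι) *
      (2 ^ j) ^ (max (ℓ - #(repeats p)) (Fintype.card ι - ℓ - 1) + #(repeats p)) := by
  have hFV : F ⊆ Fintype.piFinset fun i => Ico (p i * 2 ^ j) (p i * 2 ^ j + 2 ^ j) := by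
    refine fun e he => Fintype.mem_piFinset.mpr fun i => mem_Ico.mpr ?_
    rw [← congrFun (hp e he) i]
    exact ⟨Nat.div_mul_le_self _ _, Nat.lt_div_mul_add (by positivity)⟩
  exact card_le_of_forall_comp_eq (b := (· / 2 ^ j)) (fun _ _ h => Nat.div_le_div_right h) hmono hp
    (by positivity) hFV (by simp) hℓ

theorem card_le_of_forall_isCriticalScale [Nonempty ι] {J j ℓ : ℕ} (hj : j ≤ J)
    {F : Finset (ι → ℕ)} (hmono : ∀ e ∈ F, StrictMono e) (hFJ : ∀ e ∈ F, ∀ i, e i < 2 ^ J)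
    (hF : ∀ e ∈ F, IsCriticalScale J ((ℓ + 1) / 2) j e)
    (hℓ : (F : Set (ι → ℕ)).Pairwise fun e f => Interleaved e f → #(agreement e f) ≠ ℓ) :
    #F ≤ criticalScaleConst (Fintype.card ι) *
      ((2 ^ J) ^ (max ℓ (Fintype.card ι - (ℓ + 1) / 2) - 1) * 2 ^ j) := by
  set r := Fintype.card ι 
  set α := max ℓ (r - (ℓ + 1) / 2)
  have hr0 : 0 < r := Fintype.card_pos
  have hα0 : 0 < α := by omega
  have hclass : ∀ p ∈ F.image (dyadicPattern j), #{e ∈ F | dyadicPattern j e = p} ≤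
      franklFurediConst r * (2 ^ j) ^ α := by
    refine forall_mem_image.mpr fun e₀ he₀ => ?_
    set p := dyadicPattern j e₀
    have hbound := card_le_of_forall_dyadicPattern_eq (p := p)
      (fun e he => hmono e (mem_filter.mp he).1) (fun e he => (mem_filter.mp he).2)
      (hℓ.mono (filter_subset (fun e => dyadicPattern j e = p) F))
    refine hbound.trans (Nat.mul_le_mul_left _ (Nat.pow_le_pow_right (by positivity) ?_))
    have hrepeats : #(repeats p) ≤ (ℓ + 1) / 2 := (hF e₀ he₀).1
    omega
  have hpow : (2 ^ (J - j)) ^ (α - 1) * (2 ^ j) ^ α = (2 ^ J) ^ (α - 1) * 2 ^ j := by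
    rw [← Nat.sub_add_cancel hj, Nat.add_sub_cancel, pow_add, mul_pow, mul_assoc, ← pow_succ,
      Nat.sub_add_cancel hα0]
  calc #F ≤ franklFurediConst r * (2 ^ j) ^ α * #(F.image (dyadicPattern j)) :=
        card_le_mul_card_image F _ hclass
    _ ≤ franklFurediConst r * (2 ^ j) ^ α * (2 ^ r * (r ^ r * (2 ^ (J - j)) ^ (α - 1))) := by
        gcongr
        refine (card_image_dyadicPattern_le hj hFJ hF).trans ?_
        gcongr
        · exact Nat.one_le_two_pow
        · omega
    _ = criticalScaleConst r * ((2 ^ J) ^ (α - 1) * 2 ^ j) := by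
        rw [← hpow, criticalScaleConst]
        ring

theorem card_le_of_forall_interleaved [Nonempty ι] {J ℓ : ℕ} {F : Finset (ι → ℕ)}
    (hmono : ∀ e ∈ F, StrictMono e) (hFJ : ∀ e ∈ F, ∀ i, e i < 2 ^ J)
    (hℓ : (F : Set (ι → ℕ)).Pairwise fun e f => Interleaved e f → #(agreement e f) ≠ ℓ) :
    #F ≤ 2 * criticalScaleConst (Fintype.card ι) *
      (2 ^ J) ^ max ℓ (Fintype.card ι - (ℓ + 1) / 2) := by
  classical
  set r := Fintype.card ι
  set α := max ℓ (r - (ℓ + 1) / 2)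
  have hr0 : 0 < r := Fintype.card_pos
  let level (j : ℕ) : Finset (ι → ℕ) := {e ∈ F | IsCriticalScale J ((ℓ + 1) / 2) j e}
  have hcover : F ⊆ (range (J + 1)).biUnion level := by
    intro e he
    obtain ⟨j, hj, hcrit⟩ := exists_isCriticalScale J ((ℓ + 1) / 2) (hmono e he).injective
    exact mem_biUnion.mpr ⟨j, mem_range_succ_iff.mpr hj, mem_filter.mpr ⟨he, hcrit⟩⟩
  have hlevel : ∀ j ∈ range (J + 1),
      #(level j) ≤ criticalScaleConst r * ((2 ^ J) ^ (α - 1) * 2 ^ j) := fun j hj =>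
    card_le_of_forall_isCriticalScale (mem_range_succ_iff.mp hj)
      (fun e he => hmono e (mem_filter.mp he).1) (fun e he => hFJ e (mem_filter.mp he).1)
      (fun e he => (mem_filter.mp he).2) (hℓ.mono (filter_subset _ F))
  calc #F ≤ ∑ j ∈ range (J + 1), #(level j) := (card_le_card hcover).trans card_biUnion_le
    _ ≤ ∑ j ∈ range (J + 1), criticalScaleConst r * ((2 ^ J) ^ (α - 1) * 2 ^ j) := sum_le_sum hlevel
    _ = criticalScaleConst r * ((2 ^ J) ^ (α - 1) * ∑ j ∈ range (J + 1), 2 ^ j) := by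
        rw [mul_sum, mul_sum]
    _ ≤ criticalScaleConst r * ((2 ^ J) ^ (α - 1) * 2 ^ (J + 1)) := by
        gcongr
        exact (Nat.geomSum_lt le_rfl fun j hj => mem_range.mp hj).le
    _ = 2 * criticalScaleConst r * (2 ^ J) ^ (α - 1 + 1) := by ring
    _ = 2 * criticalScaleConst r * (2 ^ J) ^ α := by rw [Nat.sub_add_cancel (by omega)]

end DyadicScales

section Edges

theorem card_le_card_filter_strictMono {r n : ℕ} {H : Finset (Finset ℕ)}
    (hH : ∀ e ∈ H, e ⊆ Icc 1 n ∧ #e = r) :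
    #H ≤ #{g ∈ Fintype.piFinset fun _ : Fin r => Icc 1 n | StrictMono g ∧ univ.image g ∈ H} := by
  refine card_le_card_of_surjOn (univ.image ·) fun e he => ?_
  obtain ⟨hsub, hcard⟩ := hH e he
  have himage : univ.image (e.orderEmbOfFin hcard) = e := image_orderEmbOfFin_univ e hcard
  refine ⟨e.orderEmbOfFin hcard, ?_, himage⟩
  simp only [coe_filter, Fintype.mem_piFinset, Set.mem_ofPred_eq, himage]
  exact ⟨fun i => hsub (orderEmbOfFin_mem e hcard i), (e.orderEmbOfFin hcard).strictMono, he⟩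

theorem card_le_of_forall_not_intervalPartiteExact {r ℓ n : ℕ} (hr : 0 < r)
    {H : Finset (Finset ℕ)} (hH : ∀ e ∈ H, e ⊆ Icc 1 n ∧ #e = r)
    (hℓ : ∀ e ∈ H, ∀ f ∈ H, #(e ∩ f) = ℓ → ¬IntervalPartiteExact r {e, f}) :
    #H ≤ 2 * criticalScaleConst r * 2 ^ max ℓ (r - (ℓ + 1) / 2) * n ^ max ℓ (r - (ℓ + 1) / 2) := by
  obtain rfl | hn := eq_or_ne n 0
  · have hempty : H = ∅ := eq_empty_of_forall_notMem fun e he => by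
      obtain ⟨hsub, hcard⟩ := hH e he
      have hcard' : #e ≤ 0 := by simpa using card_le_card hsub
      omega
    simp [hempty]
  have : Nonempty (Fin r) := ⟨⟨0, hr⟩⟩
  set F := {g ∈ Fintype.piFinset fun _ : Fin r => Icc 1 n | StrictMono g ∧ univ.image g ∈ H}
  have hF := card_le_of_forall_interleaved (J := Nat.log 2 n + 1) (ℓ := ℓ) (F := F)
    (fun e he => (mem_filter.mp he).2.1)
    (fun e he i => (mem_Icc.mp (Fintype.mem_piFinset.mp (mem_filter.mp he).1 i)).2.trans_lt
      (Nat.lt_pow_succ_log_self one_lt_two n))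
    (fun e he f hf _ hef hcard => hℓ _ (mem_filter.mp he).2.2 _ (mem_filter.mp hf).2.2
      (hef.card_image_inter_image.trans hcard) hef.intervalPartiteExact)
  have hpow : 2 ^ (Nat.log 2 n + 1) ≤ 2 * n := by
    rw [pow_succ']
    exact Nat.mul_le_mul_left 2 (Nat.pow_log_le_self 2 hn)
  rw [Fintype.card_fin] at hF
  calc #H ≤ #F := card_le_card_filter_strictMono hH
    _ ≤ 2 * criticalScaleConst r * (2 ^ (Nat.log 2 n + 1)) ^ max ℓ (r - (ℓ + 1) / 2) := hF
    _ ≤ 2 * criticalScaleConst r * (2 * n) ^ max ℓ (r - (ℓ + 1) / 2) := by gcongr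
    _ = _ := by rw [mul_pow, mul_assoc _ (2 ^ _)]

end Edges

theorem ordered_intersection_odd_general (r ℓ : ℕ) (hr : 0 < r) :
    ∃ C : ℝ, 0 < C ∧ ∀ n : ℕ, ∀ H : Finset (Finset ℕ),
      (∀ e ∈ H, e ⊆ Finset.Icc 1 n ∧ e.card = r) →
      C * (n : ℝ) ^ (max ℓ (r - (ℓ + 1) / 2)) < (H.card : ℝ) →
      ∃ e ∈ H, ∃ f ∈ H, (e ∩ f).card = ℓ ∧ IntervalPartiteExact r {e, f} := by
  set α := max ℓ (r - (ℓ + 1) / 2)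
  refine ⟨2 * criticalScaleConst r * 2 ^ α + 1, by positivity, fun n H hH hlt => ?_⟩
  contrapose! hlt
  calc (#H : ℝ) ≤ 2 * criticalScaleConst r * 2 ^ α * (n : ℝ) ^ α :=
        mod_cast card_le_of_forall_not_intervalPartiteExact hr hH hlt
    _ ≤ (2 * criticalScaleConst r * 2 ^ α + 1) * (n : ℝ) ^ α := by gcongr; simp

/-- Theorem 7 (ordered intersections, ℓ odd): for 1 ≤ ℓ ≤ r-1 odd and
α = max{ℓ, r - (ℓ+1)/2}, there is C > 0 such that every ordered r-graph on [n]
with more than C·n^α edges contains two edges sharing exactly ℓ vertices that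
form an interval r-partite configuration. -/
theorem ordered_intersection_odd (r ℓ : ℕ) (hr : 2 ≤ r) (hℓ₁ : 1 ≤ ℓ)
    (hℓ₂ : ℓ ≤ r - 1) (hodd : Odd ℓ) :
    ∃ C : ℝ, 0 < C ∧ ∀ n : ℕ, ∀ H : Finset (Finset ℕ),
      (∀ e ∈ H, e ⊆ Finset.Icc 1 n ∧ e.card = r) →
      C * (n : ℝ) ^ (max ℓ (r - (ℓ + 1) / 2)) < (H.card : ℝ) →
      ∃ e ∈ H, ∃ f ∈ H, (e ∩ f).card = ℓ ∧ IntervalPartiteExact r {e, f} := by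
  exact ordered_intersection_odd_general r ℓ (by omega)
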